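/- For a vector of indeterminates x = (x_1,...,x_k), an indeterminate λ, and positive integers n, k, the determinant of the matrix indexed by compositions α, β of n into k non-negative parts, with entry ∏_{i=1}^k binom(x_i+λα_i+β_i, β_i), equals λ^{(k-1)·binom(n+k-1,k)} · ∏_{i=1}^n ((|x|+(λ+1)n+k-i)/i)^{binom(n+k-i-1,k-1)}, with |x| = x_1+···+x_k. -/

import Mathlib

open Finset

/-- The polynomial binomial coefficient `y(y-1)⋯(y-m+1)/m!`. -/
noncomputable def bch {F : Type*} [Field F] (y : F) (m : ℕ) : F :=
  (∏ j ∈ Finset.range m, (y - (j : F))) / (m.factorial : F)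

/-- Compositions of `n` into `k` non-negative parts. -/
abbrev Comp (n k : ℕ) := {f : Fin k → Fin (n + 1) // ∑ i, (f i : ℕ) = n}

/-- Compositions of `n` into `k` strictly positive parts. -/
abbrev CompPos (n k : ℕ) :=
  {f : Fin k → Fin (n + 1) // (∑ i, (f i : ℕ)) = n ∧ ∀ i, 0 < (f i : ℕ)}

theorem det_tri {ι R : Type*} [Fintype ι] [DecidableEq ι] [CommRing R] (M : Matrix ι ι R) (b : ι → ℕ)
    (h : ∀ i j, M i j ≠ 0 → i ≠ j → b i < b j) : M.det = ∏ i, M i i := by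
  rw [Matrix.det_apply, Finset.sum_eq_single (1 : Equiv.Perm ι)]
  · simp
  · intro σ _ hσ
    by_contra hne
    have hall : ∀ i, M (σ i) i ≠ 0 := by
      intro i hi
      apply hne
      have h0 : ∏ i, M (σ i) i = 0 := Finset.prod_eq_zero (Finset.mem_univ i) hi
      rw [h0, smul_zero]
    obtain ⟨i, hi⟩ : ∃ i, σ i ≠ i := by
      by_contra hc
      push Not at hc
      exact hσ (Equiv.ext hc)
    have hlt : ∑ i, b (σ i) < ∑ i, b i := by
      apply Finset.sum_lt_sum
      · intro j _
        by_cases hj : σ j = j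
        · rw [hj]
        · exact (h _ _ (hall j) hj).le
      · exact ⟨i, Finset.mem_univ _, h _ _ (hall i) hi⟩
    rw [Equiv.sum_comp σ b] at hlt
    exact lt_irrefl _ hlt
  · simp

def tl {n m : ℕ} (γ : Comp n (m + 1)) : Fin m → ℕ := fun i => (γ.1 i.succ : ℕ)

theorem tl_sum {n m : ℕ} (γ : Comp n (m + 1)) : (γ.1 0 : ℕ) + ∑ i, tl γ i = n := by
  have := γ.2
  rw [Fin.sum_univ_succ] at this
  exact this

theorem tl_inj {n m : ℕ} : Function.Injective (tl (n := n) (m := m)) := by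
  intro γ δ h
  have h0 : (γ.1 0 : ℕ) = δ.1 0 := by
    have h1 := tl_sum γ
    have h2 := tl_sum δ
    rw [h] at h1
    omega
  apply Subtype.ext
  funext i
  apply Fin.ext
  refine Fin.cases h0 (fun i => congrFun h i) i

theorem tl_surj {n m : ℕ} (d : Fin m → ℕ) (hd : ∑ i, d i ≤ n) : ∃ γ : Comp n (m + 1), tl γ = d := by
  have hle : ∀ i, d i ≤ n := fun i =>
    (Finset.single_le_sum (fun _ _ => Nat.zero_le _) (Finset.mem_univ i)).trans hd
  refine ⟨⟨Fin.cons ⟨n - ∑ i, d i, by omega⟩ (fun i => ⟨d i, Nat.lt_succ_of_le (hle i)⟩), ?_⟩, ?_⟩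
  · rw [Fin.sum_univ_succ]
    simp
    omega
  · funext i
    simp [tl]

theorem reindex {F : Type*} [Field F] {n m : ℕ} (f : (Fin m → ℕ) → F) (S : Finset (Fin m → ℕ))
    (h1 : ∀ d ∈ S, f d ≠ 0 → ∑ i, d i ≤ n) (h2 : ∀ d, ∑ i, d i ≤ n → f d ≠ 0 → d ∈ S) :
    ∑ d ∈ S, f d = ∑ γ : Comp n (m + 1), f (tl γ) := by
  symm
  refine Finset.sum_bij_ne_zero (fun γ _ _ => tl γ) ?_ ?_ ?_ ?_
  · intro γ _ h
    exact h2 _ (by have := tl_sum γ; omega) h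
  · intro _ _ _ _ _ _ h
    exact tl_inj h
  · intro d hd hne
    obtain ⟨γ, hγ⟩ := tl_surj d (h1 d hd hne)
    exact ⟨γ, Finset.mem_univ _, by rwa [hγ], hγ⟩
  · intros; rfl

theorem eval_expand {F : Type*} [Field F] {n m : ℕ} (P : MvPolynomial (Fin m) F)
    (hP : P.totalDegree ≤ n) (t : Fin m → F) :
    MvPolynomial.eval t P = ∑ γ : Comp n (m + 1),
      (∏ i, t i ^ tl γ i) * P.coeff (Finsupp.equivFunOnFinite.symm (tl γ)) := by
  rw [MvPolynomial.eval_eq', ← reindex (fun d => (∏ i, t i ^ d i) * P.coeff (Finsupp.equivFunOnFinite.symm d))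
    (P.support.map Finsupp.equivFunOnFinite.toEmbedding)]
  · rw [Finset.sum_map]
    apply Finset.sum_congr rfl
    intro d _
    simp [mul_comm]
  · intro d hd _
    rw [Finset.mem_map] at hd
    obtain ⟨e, he, rfl⟩ := hd
    have := MvPolynomial.le_totalDegree he
    rw [Finsupp.sum_fintype _ _ (fun _ => rfl)] at this
    exact this.trans hP
  · intro d _ hne
    rw [Finset.mem_map]
    refine ⟨Finsupp.equivFunOnFinite.symm d, ?_, by simp⟩
    rw [MvPolynomial.mem_support_iff]
    exact right_ne_zero_of_mul hne

/-- monomial evaluation matrix -/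
noncomputable def monM {F : Type*} [Field F] {n m : ℕ} (t : Comp n (m + 1) → Fin m → F) :
    Matrix (Comp n (m + 1)) (Comp n (m + 1)) F :=
  Matrix.of fun α γ => ∏ i, t α i ^ tl γ i

theorem det_monM {F : Type*} [Field F] {n m : ℕ} (y : Fin m → F) (l : F) :
    (monM (n := n) fun α i => y i + l * (tl α i : F)).det =
      (monM (n := n) (m := m) fun α i => (tl α i : F)).det * l ^ (∑ γ : Comp n (m + 1), ∑ i, tl γ i) := by
  have hU : (monM (n := n) fun α i => y i + l * (tl α i : F)) =
      (monM (n := n) (m := m) fun α i => (tl α i : F)) *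
      Matrix.of fun δ γ : Comp n (m + 1) =>
        ∏ i, (l ^ tl δ i * y i ^ (tl γ i - tl δ i) * ((tl γ i).choose (tl δ i) : F)) := by
    ext α γ
    rw [Matrix.mul_apply]
    simp only [monM, Matrix.of_apply, ← Finset.prod_mul_distrib]
    rw [← reindex (n := n) (fun d => ∏ i, ((tl α i : F) ^ d i *
      (l ^ d i * y i ^ (tl γ i - d i) * ((tl γ i).choose (d i) : F))))
      (Fintype.piFinset fun i => Finset.range (tl γ i + 1))]
    · rw [← Finset.prod_univ_sum (fun i => Finset.range (tl γ i + 1)) (fun i j => (tl α i : F) ^ j *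
        (l ^ j * y i ^ (tl γ i - j) * ((tl γ i).choose j : F)))]
      apply Finset.prod_congr rfl
      intro i _
      rw [add_comm, add_pow]
      apply Finset.sum_congr rfl
      intro j _
      rw [mul_pow]
      ring
    · intro d hd _
      rw [Fintype.mem_piFinset] at hd
      have : ∑ i, d i ≤ ∑ i, tl γ i := Finset.sum_le_sum fun i _ => by
        have := Finset.mem_range.1 (hd i); omega
      have := tl_sum γ
      omega
    · intro d _ hne
      rw [Fintype.mem_piFinset]
      intro i
      have := Finset.prod_ne_zero_iff.1 hne i (Finset.mem_univ _)
      by_contra hc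
      apply this
      rw [Nat.choose_eq_zero_of_lt (by simpa using hc)]
      simp
  rw [hU, Matrix.det_mul]
  congr 1
  rw [det_tri _ (fun γ => ∑ i, tl γ i)]
  · simp [Finset.prod_pow_eq_pow_sum]
  · intro δ γ hne hd
    simp only [Matrix.of_apply] at hne
    have hle : ∀ i, tl δ i ≤ tl γ i := by
      intro i
      have := Finset.prod_ne_zero_iff.1 hne i (Finset.mem_univ _)
      by_contra hc
      apply this
      rw [Nat.choose_eq_zero_of_lt (by simpa using hc)]
      simp
    apply Finset.sum_lt_sum (fun i _ => hle i)
    by_contra hc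
    push Not at hc
    exact hd (tl_inj (funext fun i => le_antisymm (hle i) (hc i (Finset.mem_univ _))))

/-- polynomial version of the binomial -/
noncomputable def bpoly {F : Type*} [Field F] {m : ℕ} (P : MvPolynomial (Fin m) F) (b : ℕ) :
    MvPolynomial (Fin m) F :=
  (∏ j ∈ Finset.range b, (P + MvPolynomial.C ((b : F) - (j : F)))) * MvPolynomial.C ((b.factorial : F)⁻¹)

theorem bpoly_eval {F : Type*} [Field F] {m : ℕ} (P : MvPolynomial (Fin m) F) (b : ℕ) (t : Fin m → F) :
    MvPolynomial.eval t (bpoly P b) = bch (MvPolynomial.eval t P + (b : F)) b := by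
  simp [bpoly, bch, map_prod, div_eq_mul_inv, add_sub_assoc]

theorem bpoly_deg {F : Type*} [Field F] {m : ℕ} (P : MvPolynomial (Fin m) F) (b : ℕ)
    (hP : P.totalDegree ≤ 1) : (bpoly P b).totalDegree ≤ b := by
  unfold bpoly
  refine (MvPolynomial.totalDegree_mul _ _).trans ?_
  rw [MvPolynomial.totalDegree_C, add_zero]
  refine (MvPolynomial.totalDegree_finsetProd _ _).trans ?_
  refine (Finset.sum_le_card_nsmul _ _ 1 ?_).trans (by simp)
  intro j _
  refine (MvPolynomial.totalDegree_add _ _).trans ?_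
  rw [MvPolynomial.totalDegree_C]
  exact max_le hP (Nat.zero_le _)

/-- polynomial for each column -/
noncomputable def colP {F : Type*} [Field F] {n m : ℕ} (s : F) (β : Comp n (m + 1)) :
    MvPolynomial (Fin m) F :=
  bpoly (MvPolynomial.C s - ∑ i, MvPolynomial.X i) (β.1 0 : ℕ) * ∏ i, bpoly (MvPolynomial.X i) (tl β i)

theorem colP_deg {F : Type*} [Field F] {n m : ℕ} (s : F) (β : Comp n (m + 1)) :
    (colP s β).totalDegree ≤ n := by
  refine (MvPolynomial.totalDegree_mul _ _).trans ?_
  have h1 := bpoly_deg (MvPolynomial.C s - ∑ i, MvPolynomial.X i : MvPolynomial (Fin m) F) (β.1 0 : ℕ) (by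
    refine (MvPolynomial.totalDegree_sub _ _).trans ?_
    rw [MvPolynomial.totalDegree_C]
    refine max_le (Nat.zero_le _) (MvPolynomial.totalDegree_finsetSum_le ?_)
    intro i _
    exact (MvPolynomial.totalDegree_X i).le)
  have h2 : (∏ i, bpoly (MvPolynomial.X i : MvPolynomial (Fin m) F) (tl β i)).totalDegree ≤ ∑ i, tl β i := by
    refine (MvPolynomial.totalDegree_finsetProd _ _).trans (Finset.sum_le_sum fun i _ => ?_)
    exact bpoly_deg _ _ (MvPolynomial.totalDegree_X i).le
  have := tl_sum β
  omega

/-- the matrix of the statement -/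
noncomputable def MM {F : Type*} [Field F] (n m : ℕ) (x : Fin (m + 1) → F) (l : F) :
    Matrix (Comp n (m + 1)) (Comp n (m + 1)) F :=
  Matrix.of fun α β : Comp n (m + 1) =>
        ∏ i, bch (x i + l * ((α.1 i : ℕ) : F) + ((β.1 i : ℕ) : F)) ((β.1 i : ℕ))

theorem MM_det {F : Type*} [Field F] (n m : ℕ) (x : Fin (m + 1) → F) (l s : F)
    (hs : s = ∑ i, x i + l * n) :
    (MM n m x l).det = (monM (n := n) (m := m) fun α i => (tl α i : F)).det *
      l ^ (∑ γ : Comp n (m + 1), ∑ i, tl γ i) *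
      (Matrix.of fun γ β : Comp n (m + 1) =>
        (colP s β).coeff (Finsupp.equivFunOnFinite.symm (tl γ))).det := by
  rw [← det_monM (fun i => x i.succ) l, ← Matrix.det_mul]
  congr 1
  ext α β
  rw [Matrix.mul_apply]
  simp only [monM, Matrix.of_apply]
  rw [← eval_expand _ (colP_deg s β)]
  simp only [colP, map_mul, map_prod, bpoly_eval, map_sub, map_sum, MvPolynomial.eval_C,
    MvPolynomial.eval_X, MM, Matrix.of_apply]
  rw [Fin.prod_univ_succ]
  congr 3
  rw [hs, Fin.sum_univ_succ, Finset.sum_add_distrib, ← Finset.mul_sum]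
  have : (n : F) = ((α.1 0 : ℕ) : F) + ∑ i, (tl α i : F) := by
    have := congrArg (Nat.cast (R := F)) (tl_sum α)
    push_cast at this
    exact this.symm
  rw [this]
  ring

theorem bch_neg {F : Type*} [Field F] [CharZero F] (b : ℕ) : bch (-1 : F) b = (-1) ^ b := by
  have : ∏ j ∈ Finset.range b, ((-1 : F) - (j : F)) = (-1) ^ b * (b.factorial : F) := by
    induction b with
    | zero => simp
    | succ b ih =>
      rw [Finset.prod_range_succ, ih, Nat.factorial_succ]
      push_cast
      ring
  rw [bch, this, mul_div_assoc, div_self (by exact_mod_cast b.factorial_ne_zero), mul_one]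

theorem bch_zero {F : Type*} [Field F] (a b : ℕ) (h : a < b) :
    bch (-1 + -1 * (a : F) + (b : F)) b = 0 := by
  rw [bch, Finset.prod_eq_zero (i := b - 1 - a), zero_div]
  · rw [Finset.mem_range]; omega
  · obtain ⟨c, rfl⟩ := Nat.exists_eq_add_of_lt h
    have : a + c + 1 - 1 - a = c := by omega
    rw [this]
    push_cast
    ring

theorem det_neg {F : Type*} [Field F] [CharZero F] (n m : ℕ) (X : F) :
    (MM n m (Fin.cons X fun _ => -1) (-1)).det =
      (∏ β : Comp n (m + 1), bch X (β.1 0 : ℕ)) * (-1) ^ (∑ γ : Comp n (m + 1), ∑ i, tl γ i) := by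
  rw [← Matrix.det_transpose, det_tri _ (fun γ => ∑ i, tl γ i)]
  · rw [← Finset.prod_pow_eq_pow_sum, ← Finset.prod_mul_distrib]
    apply Finset.prod_congr rfl
    intro β _
    simp only [MM, Matrix.transpose_apply, Matrix.of_apply]
    rw [Fin.prod_univ_succ]
    simp only [Fin.cons_zero, Fin.cons_succ, neg_mul, one_mul, neg_add_cancel_right]
    congr 1
    simp only [bch_neg]
    rw [Finset.prod_pow_eq_pow_sum]
    rfl
  · intro β α hne hd
    simp only [MM, Matrix.transpose_apply, Matrix.of_apply] at hne
    rw [Fin.prod_univ_succ] at hne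
    replace hne := right_ne_zero_of_mul hne
    simp only [Fin.cons_succ] at hne
    have hle : ∀ i, tl β i ≤ tl α i := by
      intro i
      have := Finset.prod_ne_zero_iff.1 hne i (Finset.mem_univ _)
      by_contra hc
      exact this (bch_zero _ _ (not_le.1 hc))
    apply Finset.sum_lt_sum (fun i _ => hle i)
    by_contra hc
    push Not at hc
    exact hd (tl_inj (funext fun i => le_antisymm (hle i) (hc i (Finset.mem_univ _))))

theorem MM_det2 {F : Type*} [Field F] [CharZero F] (n m : ℕ) (x : Fin (m + 1) → F) (l : F) :
    (MM n m x l).det = l ^ (∑ γ : Comp n (m + 1), ∑ i, tl γ i) *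
      ∏ β : Comp n (m + 1), bch (∑ i, x i + l * n + n + m) (β.1 0 : ℕ) := by
  have h1 := MM_det n m x l _ rfl
  have h2 := MM_det n m (Fin.cons (∑ i, x i + l * n + n + m) fun _ => -1) (-1) (∑ i, x i + l * n) (by
    rw [Fin.sum_univ_succ]
    simp)
  rw [det_neg] at h2
  have h3 : ((-1 : F) ^ (∑ γ : Comp n (m + 1), ∑ i, tl γ i)) ≠ 0 := pow_ne_zero _ (by simp)
  have h4 := mul_right_cancel₀ h3 (h2.trans (mul_right_comm _ _ _))
  rw [h1, h4]
  ring

theorem card_comp (n m j : ℕ) (hj : j ≤ n) :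
    (Finset.univ.filter fun β : Comp n (m + 1) => j ≤ (β.1 0 : ℕ)).card = (n - j + m).choose m := by
  have h := Finset.card_finsuppAntidiag_nat_eq_choose (s := (Finset.univ : Finset (Fin (m + 1)))) (n - j)
  rw [Finset.card_univ, Fintype.card_fin] at h
  have e : m + 1 + (n - j) - 1 = n - j + m := by omega
  rw [e, Nat.choose_symm_add] at h
  rw [← h]
  refine Finset.card_bij (fun β _ => Finsupp.equivFunOnFinite.symm
    (Fin.cons ((β.1 0 : ℕ) - j) (tl β))) ?_ ?_ ?_
  · intro β hβ
    have h0 := (Finset.mem_filter.1 hβ).2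
    have := tl_sum β
    rw [Finset.mem_finsuppAntidiag]
    refine ⟨?_, by simp⟩
    simp [Fin.sum_univ_succ]
    omega
  · intro β _ γ _ h
    apply tl_inj
    have := Finsupp.equivFunOnFinite.symm.injective h
    exact (Fin.cons_inj.1 this).2
  · intro d hd
    rw [Finset.mem_finsuppAntidiag] at hd
    have hs := hd.1
    rw [Fin.sum_univ_succ] at hs
    obtain ⟨γ, hγ⟩ := tl_surj (n := n) (fun i : Fin m => d i.succ) (by omega)
    have hγ2 := tl_sum γ
    rw [hγ] at hγ2
    dsimp only at hγ2
    refine ⟨γ, ?_, ?_⟩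
    · simp only [Finset.mem_filter, Finset.mem_univ, true_and]
      omega
    · ext i
      refine Fin.cases ?_ (fun i => ?_) i
      · simp; omega
      · simp [hγ]

theorem sum_swap (n m : ℕ) (i : Fin (m + 1)) :
    ∑ β : Comp n (m + 1), (β.1 i : ℕ) = ∑ β : Comp n (m + 1), (β.1 0 : ℕ) := by
  have key : ∀ β : Comp n (m + 1), ∑ j, ((β.1 (Equiv.swap i 0 j)) : ℕ) = n := fun β => by
    rw [Equiv.sum_comp (Equiv.swap i 0) (fun j => (β.1 j : ℕ))]
    exact β.2
  refine Finset.sum_bij' (fun β _ => ⟨fun j => β.1 (Equiv.swap i 0 j), key β⟩)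
    (fun β _ => ⟨fun j => β.1 (Equiv.swap i 0 j), key β⟩) ?_ ?_ ?_ ?_ ?_
  · simp
  · simp
  · intro β _; simp
  · intro β _; simp
  · intro β _; simp

theorem exp_eq (n m : ℕ) :
    ∑ γ : Comp n (m + 1), ∑ i, tl γ i = m * (n + m).choose (m + 1) := by
  have h1 : ∑ γ : Comp n (m + 1), ∑ i, tl γ i = m * ∑ β : Comp n (m + 1), (β.1 0 : ℕ) := by
    have h0 : ∀ i : Fin m, ∑ γ : Comp n (m + 1), tl γ i = ∑ β : Comp n (m + 1), (β.1 0 : ℕ) :=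
      fun i => sum_swap n m (Fin.succ i)
    rw [Finset.sum_comm, Finset.sum_congr rfl (fun i _ => h0 i)]
    simp
  have h2 : (∑ β : Comp n (m + 1), (β.1 0 : ℕ)) + ∑ γ : Comp n (m + 1), ∑ i, tl γ i =
      (n + m).choose m * n := by
    rw [← Finset.sum_add_distrib, Finset.sum_congr rfl (fun γ _ => tl_sum γ)]
    have := card_comp n m 0 (Nat.zero_le _)
    simp only [Nat.zero_le, Finset.filter_true, Nat.sub_zero] at this
    rw [Finset.sum_const, this, smul_eq_mul]
  have h3 := Nat.choose_succ_right_eq (n + m) m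
  rw [Nat.add_sub_cancel, ← h2, h1] at h3
  rw [h1]
  congr 1
  have h4 : (n + m).choose (m + 1) * (m + 1) = (∑ β : Comp n (m + 1), (β.1 0 : ℕ)) * (m + 1) := by
    rw [h3]; ring
  exact (Nat.eq_of_mul_eq_mul_right (Nat.succ_pos m) h4).symm

theorem bch_prod {F : Type*} [Field F] (X : F) (b : ℕ) :
    bch X b = ∏ i ∈ Finset.Icc 1 b, ((X + 1 - (i : F)) / (i : F)) := by
  rw [bch]
  induction b with
  | zero => simp
  | succ b ih =>
    rw [Finset.prod_Icc_succ_top (by omega), ← ih, Finset.prod_range_succ, Nat.factorial_succ]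
    push_cast
    rw [div_mul_div_comm, mul_comm ((b : F) + 1), add_sub_add_right_eq_sub]

theorem prod_bch {F : Type*} [Field F] (n m : ℕ) (X : F) :
    ∏ β : Comp n (m + 1), bch X (β.1 0 : ℕ) =
      ∏ i ∈ Finset.Icc 1 n, ((X + 1 - (i : F)) / (i : F)) ^ ((n - i + m).choose m) := by
  have : ∀ β : Comp n (m + 1), bch X (β.1 0 : ℕ) =
      ∏ i ∈ Finset.Icc 1 n, if i ≤ (β.1 0 : ℕ) then ((X + 1 - (i : F)) / (i : F)) else 1 := by
    intro β
    rw [bch_prod, ← Finset.prod_filter]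
    apply Finset.prod_congr _ (fun _ _ => rfl)
    ext i
    have := (β.1 0).2
    simp only [Finset.mem_Icc, Finset.mem_filter]
    omega
  simp only [this]
  rw [Finset.prod_comm]
  apply Finset.prod_congr rfl
  intro i hi
  rw [← Finset.prod_filter, Finset.prod_const, card_comp n m i (Finset.mem_Icc.1 hi).2]

theorem stmt9 {F : Type*} [Field F] [CharZero F] (n k : ℕ) (hn : 0 < n) (hk : 0 < k)
    (x : Fin k → F) (l : F) :
    Matrix.det (Matrix.of fun α β : Comp n k =>
        ∏ i, bch (x i + l * ((α.1 i : ℕ) : F) + ((β.1 i : ℕ) : F)) ((β.1 i : ℕ))) =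
      l ^ ((k - 1) * (n + k - 1).choose k) *
        ∏ i ∈ Finset.Icc 1 n,
          (((∑ j, x j) + (l + 1) * (n : F) + (k : F) - (i : F)) / (i : F)) ^
            ((n + k - i - 1).choose (k - 1)) := by
  obtain ⟨m, rfl⟩ := Nat.exists_eq_succ_of_ne_zero hk.ne'
  have h := MM_det2 n m x l
  rw [exp_eq, prod_bch] at h
  refine h.trans ?_
  congr 1
  apply Finset.prod_congr rfl
  intro i hi
  have hi := (Finset.mem_Icc.1 hi).2
  have e : n + m.succ - i - 1 = n - i + m := by omega
  rw [e]
  congr 2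
  push_cast
  ring
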